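/- arXiv:1310.7337 — 4 statements merged into one kernel-verified Lean document; each statement's English description precedes it below -/
import Mathlib

section
/- Let (E₁, E₀, A, B) be a matrix factorization of f ∈ Q and let ∇₀, ∇₁ be connections on E₀, E₁. Define Ā : E₁ ⊕ (Ω¹⊗E₀) → E₀ ⊕ (Ω¹⊗E₁) by Ā(x, w) = (A x, df⊗x − (1⊗B)w) and B̄ : E₀ ⊕ (Ω¹⊗E₁) → E₁ ⊕ (Ω¹⊗E₀) by B̄(y, v) = (B y, df⊗y − (1⊗A)v). Then φ = (φ₁, φ₀) with φ₁(x) = (x, At₁ x) and φ₀(y) = (y, At₀ y) is a strict morphism of matrix factorizations; that is, Ā∘φ₁ = φ₀∘A and B̄∘φ₀ = φ₁∘B, equivalently df⊗x − (1⊗B)(At₁ x) = At₀(A x) for all x ∈ E₁ and df⊗y − (1⊗A)(At₀ y) = At₁(B y) for all y ∈ E₀. -/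
/-!
STATEMENT 1: For a matrix factorization (E₁, E₀, A, B) of f ∈ Q with connections ∇₀, ∇₁
on E₀, E₁, the pair φ = (φ₁, φ₀), φ₁ x = (x, At₁ x), φ₀ y = (y, At₀ y), is a strict
morphism of matrix factorizations into E^(1) = (Q →^{df∧} Ω¹) ⊗_mf E, i.e.
Ā ∘ φ₁ = φ₀ ∘ A and B̄ ∘ φ₀ = φ₁ ∘ B.
-/

open TensorProduct

/-- A connection on a `Q`-module `E` relative to `k`: an additive map
`E → Ω¹_{Q/k} ⊗_Q E` satisfying the Leibniz rule. -/
structure Conn (k Q E : Type*) [CommRing k] [CommRing Q] [Algebra k Q]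
    [AddCommGroup E] [Module Q E] where
  toFun : E → (Ω[Q⁄k] ⊗[Q] E)
  map_add : ∀ x y, toFun (x + y) = toFun x + toFun y
  leibniz : ∀ (q : Q) (x : E),
    toFun (q • x) = (KaehlerDifferential.D k Q) q ⊗ₜ[Q] x + q • toFun x

/-!
The Atiyah class is the commutator `[∇, -]` of linear maps with the connections. It is a
derivation, so `[∇, B] ∘ A + (1 ⊗ B) ∘ [∇, A] = [∇, B ∘ A] = [∇, f • id]`, and the Leibniz rule
identifies the last map with `x ↦ df ⊗ x`.
-/

namespace Conn

variable {k Q E F G : Type*} [CommRing k] [CommRing Q] [Algebra k Q]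
  [AddCommGroup E] [Module Q E] [AddCommGroup F] [Module Q F] [AddCommGroup G] [Module Q G]

/-- The commutator `[∇, A] = ∇F ∘ A - (1 ⊗ A) ∘ ∇E` of a linear map `A : E → F` with connections
on its source and target. The Atiyah class of a matrix factorization `(A, B)` is the pair
`([∇, A], [∇, B])`. The terms `dq ⊗ A x` cancel, so the commutator is bundled as a `Q`-linear
map although connections are only additive. -/
noncomputable def commutator (nablaE : Conn k Q E) (nablaF : Conn k Q F) (A : E →ₗ[Q] F) :
    E →ₗ[Q] Ω[Q⁄k] ⊗[Q] F where
  toFun x := nablaF.toFun (A x) - A.lTensor Ω[Q⁄k] (nablaE.toFun x)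
  map_add' x y := by
    simp only [_root_.map_add, nablaE.map_add, nablaF.map_add, add_sub_add_comm]
  map_smul' q x := by
    simp only [map_smul, _root_.map_add, nablaE.leibniz, nablaF.leibniz,
      LinearMap.lTensor_tmul, add_sub_add_left_eq_sub, smul_sub, RingHom.id_apply]

theorem commutator_apply (nablaE : Conn k Q E) (nablaF : Conn k Q F) (A : E →ₗ[Q] F) (x : E) :
    commutator nablaE nablaF A x = nablaF.toFun (A x) - A.lTensor Ω[Q⁄k] (nablaE.toFun x) :=
  rfl

theorem commutator_comp (nablaE : Conn k Q E) (nablaF : Conn k Q F) (nablaG : Conn k Q G)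
    (B : F →ₗ[Q] G) (A : E →ₗ[Q] F) :
    commutator nablaE nablaG (B ∘ₗ A) =
      commutator nablaF nablaG B ∘ₗ A + B.lTensor Ω[Q⁄k] ∘ₗ commutator nablaE nablaF A := by
  ext x
  simp only [LinearMap.add_apply, LinearMap.comp_apply, commutator_apply, map_sub,
    LinearMap.lTensor_comp_apply, sub_add_sub_cancel]

theorem commutator_smul_id (nabla : Conn k Q E) (f : Q) :
    commutator nabla nabla (f • LinearMap.id) =
      TensorProduct.mk Q Ω[Q⁄k] E (KaehlerDifferential.D k Q f) := by
  ext x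
  simp only [commutator_apply, LinearMap.smul_apply, LinearMap.id_apply, nabla.leibniz,
    LinearMap.lTensor_smul, LinearMap.lTensor_id, TensorProduct.mk_apply, add_sub_cancel_right]

theorem D_tmul_sub_lTensor_commutator (nablaE : Conn k Q E) (nablaF : Conn k Q F) {f : Q}
    {A : E →ₗ[Q] F} {B : F →ₗ[Q] E} (hBA : ∀ x, B (A x) = f • x) (x : E) :
    KaehlerDifferential.D k Q f ⊗ₜ[Q] x - B.lTensor Ω[Q⁄k] (commutator nablaE nablaF A x) =
      commutator nablaF nablaE B (A x) := by
  have hcomp : B ∘ₗ A = f • LinearMap.id := LinearMap.ext hBA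
  have hleibniz := commutator_comp nablaE nablaF nablaE B A
  rw [hcomp, commutator_smul_id] at hleibniz
  exact sub_eq_of_eq_add (LinearMap.congr_fun hleibniz x)

end Conn

theorem phi_is_strict_morphism_general
    {k Q E₀ E₁ : Type*} [CommRing k] [CommRing Q] [Algebra k Q]
    [AddCommGroup E₀] [Module Q E₀] [AddCommGroup E₁] [Module Q E₁]
    {f : Q} {A : E₁ →ₗ[Q] E₀} {B : E₀ →ₗ[Q] E₁}
    (hAB : ∀ y, A (B y) = f • y) (hBA : ∀ x, B (A x) = f • x)
    (na0 : Conn k Q E₀) (na1 : Conn k Q E₁)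
    {At₁ : E₁ → Ω[Q⁄k] ⊗[Q] E₀} {At₀ : E₀ → Ω[Q⁄k] ⊗[Q] E₁}
    (hAt₁ : ∀ x, At₁ x = na0.toFun (A x) - A.lTensor Ω[Q⁄k] (na1.toFun x))
    (hAt₀ : ∀ y, At₀ y = na1.toFun (B y) - B.lTensor Ω[Q⁄k] (na0.toFun y)) :
    (∀ x, (A x, KaehlerDifferential.D k Q f ⊗ₜ[Q] x - B.lTensor Ω[Q⁄k] (At₁ x)) =
      (A x, At₀ (A x))) ∧
    (∀ y, (B y, KaehlerDifferential.D k Q f ⊗ₜ[Q] y - A.lTensor Ω[Q⁄k] (At₀ y)) =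
      (B y, At₁ (B y))) := by
  obtain rfl : At₁ = na1.commutator na0 A := funext hAt₁
  obtain rfl : At₀ = na0.commutator na1 B := funext hAt₀
  exact ⟨fun x => Prod.ext rfl (na1.D_tmul_sub_lTensor_commutator na0 hBA x),
    fun y => Prod.ext rfl (na0.D_tmul_sub_lTensor_commutator na1 hAB y)⟩

theorem phi_is_strict_morphism
    (k Q : Type*) [CommRing k] [CommRing Q] [Algebra k Q]
    (E₀ E₁ : Type*) [AddCommGroup E₀] [Module Q E₀] [AddCommGroup E₁] [Module Q E₁]
    [Module.Finite Q E₀] [Module.Projective Q E₀]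
    [Module.Finite Q E₁] [Module.Projective Q E₁]
    (f : Q) (A : E₁ →ₗ[Q] E₀) (B : E₀ →ₗ[Q] E₁)
    (hAB : ∀ y : E₀, A (B y) = f • y) (hBA : ∀ x : E₁, B (A x) = f • x)
    (na0 : Conn k Q E₀) (na1 : Conn k Q E₁)
    -- the Atiyah class components
    (At₁ : E₁ → Ω[Q⁄k] ⊗[Q] E₀) (At₀ : E₀ → Ω[Q⁄k] ⊗[Q] E₁)
    (hAt₁ : ∀ x, At₁ x = na0.toFun (A x) - (LinearMap.lTensor (Ω[Q⁄k]) A) (na1.toFun x))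
    (hAt₀ : ∀ y, At₀ y = na1.toFun (B y) - (LinearMap.lTensor (Ω[Q⁄k]) B) (na0.toFun y)) :
    -- Ā ∘ φ₁ = φ₀ ∘ A
    (∀ x : E₁,
      ((A x, (KaehlerDifferential.D k Q f) ⊗ₜ[Q] x
          - (LinearMap.lTensor (Ω[Q⁄k]) B) (At₁ x)) : E₀ × (Ω[Q⁄k] ⊗[Q] E₁))
        = (A x, At₀ (A x))) ∧
    -- B̄ ∘ φ₀ = φ₁ ∘ B
    (∀ y : E₀,
      ((B y, (KaehlerDifferential.D k Q f) ⊗ₜ[Q] y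
          - (LinearMap.lTensor (Ω[Q⁄k]) A) (At₀ y)) : E₁ × (Ω[Q⁄k] ⊗[Q] E₀))
        = (B y, At₁ (B y))) :=
  phi_is_strict_morphism_general hAB hBA na0 na1 hAt₁ hAt₀
end

section
/- Let (E₁, E₀, A, B) be a matrix factorization of f ∈ Q and let (∇₀, ∇₁) and (∇₀′, ∇₁′) be two pairs of connections on E₀, E₁, with associated strict morphisms φ and φ′ into E^(1) = (Q →^{df∧} Ω¹) ⊗_mf E. Then φ and φ′ are homotopic: the maps α₀ = (0, ∇₀ − ∇₀′) : E₀ → E₁ ⊕ (Ω¹⊗E₀) and α₁ = (0, ∇₁ − ∇₁′) : E₁ → E₀ ⊕ (Ω¹⊗E₁) are Q-linear and satisfy Ā∘α₀ + α₁∘B = φ₀ − φ₀′ and B̄∘α₁ + α₀∘A = φ₁ − φ₁′, where Ā(x, w) = (A x, df⊗x − (1⊗B)w) and B̄(y, v) = (B y, df⊗y − (1⊗A)v) are the differentials of E^(1). -/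
/-!
STATEMENT 2: The strict morphism φ : E → E^(1) associated to a choice of connections is
independent of the choice of connections up to homotopy: given two pairs of connections,
the maps α₀ = (0, ∇₀ − ∇₀′) and α₁ = (0, ∇₁ − ∇₁′) are Q-linear and give a homotopy
Ā∘α₀ + α₁∘B = φ₀ − φ₀′ and B̄∘α₁ + α₀∘A = φ₁ − φ₁′.
-/

open TensorProduct

/-!
By the Leibniz rule two connections on the same module differ by a `Q`-linear map, and the
Atiyah classes of two choices of connections differ by the commutator of these linear maps with
the matrix factorization. Since the first component of `φ` is the identity, `φ - φ'` takes values
in the summand `Ω ⊗ E`, on which the differential of `E^(1)` is minus that of `E`: the commutator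
is then exactly the boundary of the homotopy.
-/

section KoszulTensor

variable {Q M E F : Type*} [CommRing Q] [AddCommGroup M] [Module Q M]
  [AddCommGroup E] [Module Q E] [AddCommGroup F] [Module Q F]

/-- One component of the differential of `(Q → M) ⊗_mf E`, where `Q → M` sends `1` to `ω` and
`A`, `B` are the two maps of `E`. For `M = Ω` and `ω = df` it is `Ā`, and `B̄` after exchanging
`A` and `B`; the minus sign is the Koszul sign of moving past `M`, which has odd degree. -/
def koszulTensorDifferential (ω : M) (A : E →ₗ[Q] F) (B : F →ₗ[Q] E) :
    E × (M ⊗[Q] F) →ₗ[Q] F × (M ⊗[Q] E) :=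
  (A ∘ₗ LinearMap.fst Q E (M ⊗[Q] F)).prod
    (TensorProduct.mk Q M E ω ∘ₗ LinearMap.fst Q E (M ⊗[Q] F) -
      B.lTensor M ∘ₗ LinearMap.snd Q E (M ⊗[Q] F))

theorem koszulTensorDifferential_comp_inr (ω : M) (A : E →ₗ[Q] F) (B : F →ₗ[Q] E) :
    koszulTensorDifferential ω A B ∘ₗ LinearMap.inr Q E (M ⊗[Q] F) =
      -(LinearMap.inr Q F (M ⊗[Q] E) ∘ₗ B.lTensor M) := by
  refine LinearMap.ext fun w => ?_
  simp [koszulTensorDifferential]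

end KoszulTensor

namespace Conn

variable {k Q E F : Type*} [CommRing k] [CommRing Q] [Algebra k Q]
  [AddCommGroup E] [Module Q E] [AddCommGroup F] [Module Q F]

/-- The difference of two connections on the same module, as a `Q`-linear map. -/
noncomputable def difference (D D' : Conn k Q E) : E →ₗ[Q] Ω[Q⁄k] ⊗[Q] E where
  toFun x := D.toFun x - D'.toFun x
  map_add' x y := by rw [D.map_add, D'.map_add, add_sub_add_comm]
  map_smul' q x := by
    rw [D.leibniz, D'.leibniz, add_sub_add_left_eq_sub, ← smul_sub, RingHom.id_apply]

/-- The Atiyah class of a map `A : E → F` with respect to connections on `E` and `F`, as a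
`Q`-linear map. For a matrix factorization, `At₁` and `At₀` are the Atiyah classes of its two
maps. -/
noncomputable def atiyahClass (DE : Conn k Q E) (DF : Conn k Q F) (A : E →ₗ[Q] F) :
    E →ₗ[Q] Ω[Q⁄k] ⊗[Q] F where
  toFun x := DF.toFun (A x) - A.lTensor Ω[Q⁄k] (DE.toFun x)
  map_add' x y := by
    rw [_root_.map_add, DF.map_add, DE.map_add, _root_.map_add, add_sub_add_comm]
  map_smul' q x := by
    rw [map_smul, DF.leibniz, DE.leibniz, _root_.map_add, LinearMap.lTensor_tmul, map_smul,
      add_sub_add_left_eq_sub, ← smul_sub, RingHom.id_apply]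

/-- A component of the strict morphism `φ : E → E^(1)`: with `A` the map of the matrix
factorization out of the given component, `x ↦ (x, At x)`. -/
noncomputable def strictMorphism (DE : Conn k Q E) (DF : Conn k Q F) (A : E →ₗ[Q] F) :
    E →ₗ[Q] E × (Ω[Q⁄k] ⊗[Q] F) :=
  LinearMap.id.prod (DE.atiyahClass DF A)

theorem atiyahClass_sub_atiyahClass (DE DE' : Conn k Q E) (DF DF' : Conn k Q F)
    (A : E →ₗ[Q] F) :
    DE.atiyahClass DF A - DE'.atiyahClass DF' A =
      DF.difference DF' ∘ₗ A - A.lTensor Ω[Q⁄k] ∘ₗ DE.difference DE' := by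
  refine LinearMap.ext fun x => ?_
  simp only [atiyahClass, difference, LinearMap.sub_apply, LinearMap.comp_apply,
    LinearMap.coe_mk, AddHom.coe_mk, map_sub]
  exact sub_sub_sub_comm _ _ _ _

theorem strictMorphism_sub_strictMorphism (DE DE' : Conn k Q E) (DF DF' : Conn k Q F)
    (A : E →ₗ[Q] F) :
    DE.strictMorphism DF A - DE'.strictMorphism DF' A =
      LinearMap.inr Q E (Ω[Q⁄k] ⊗[Q] F) ∘ₗ
        (DE.atiyahClass DF A - DE'.atiyahClass DF' A) := by
  refine LinearMap.ext fun x => ?_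
  simp [strictMorphism]

/-- A component of the homotopy between the strict morphisms of two choices of connections:
`x ↦ (0, ∇ x - ∇' x)`, where `F` is the other component of the matrix factorization. -/
noncomputable def homotopy (F : Type*) [AddCommGroup F] [Module Q F] (D D' : Conn k Q E) :
    E →ₗ[Q] F × (Ω[Q⁄k] ⊗[Q] E) :=
  LinearMap.inr Q F (Ω[Q⁄k] ⊗[Q] E) ∘ₗ D.difference D'

theorem koszulTensorDifferential_comp_homotopy_add (ω : Ω[Q⁄k]) (A : F →ₗ[Q] E)
    (B : E →ₗ[Q] F) (DE DE' : Conn k Q E) (DF DF' : Conn k Q F) :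
    koszulTensorDifferential ω A B ∘ₗ homotopy F DE DE' + homotopy E DF DF' ∘ₗ B =
      DE.strictMorphism DF B - DE'.strictMorphism DF' B :=
  calc
    _ = -(LinearMap.inr Q E (Ω[Q⁄k] ⊗[Q] F) ∘ₗ B.lTensor Ω[Q⁄k] ∘ₗ DE.difference DE') +
          LinearMap.inr Q E (Ω[Q⁄k] ⊗[Q] F) ∘ₗ DF.difference DF' ∘ₗ B := by
      rw [homotopy, homotopy, ← LinearMap.comp_assoc, koszulTensorDifferential_comp_inr,
        LinearMap.neg_comp, LinearMap.comp_assoc, LinearMap.comp_assoc]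
    _ = LinearMap.inr Q E (Ω[Q⁄k] ⊗[Q] F) ∘ₗ
          (DF.difference DF' ∘ₗ B - B.lTensor Ω[Q⁄k] ∘ₗ DE.difference DE') := by
      rw [LinearMap.comp_sub, neg_add_eq_sub]
    _ = DE.strictMorphism DF B - DE'.strictMorphism DF' B := by
      rw [strictMorphism_sub_strictMorphism, atiyahClass_sub_atiyahClass]

end Conn

theorem phi_independent_of_connection_up_to_homotopy_general
    {k Q E₀ E₁ : Type*} [CommRing k] [CommRing Q] [Algebra k Q]
    [AddCommGroup E₀] [Module Q E₀] [AddCommGroup E₁] [Module Q E₁]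
    (ω : Ω[Q⁄k]) (A : E₁ →ₗ[Q] E₀) (B : E₀ →ₗ[Q] E₁)
    (D₀ D₀' : Conn k Q E₀) (D₁ D₁' : Conn k Q E₁) :
    koszulTensorDifferential ω A B ∘ₗ D₀.homotopy E₁ D₀' + D₁.homotopy E₀ D₁' ∘ₗ B =
        D₀.strictMorphism D₁ B - D₀'.strictMorphism D₁' B ∧
      koszulTensorDifferential ω B A ∘ₗ D₁.homotopy E₀ D₁' + D₀.homotopy E₁ D₀' ∘ₗ A =
        D₁.strictMorphism D₀ A - D₁'.strictMorphism D₀' A :=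
  ⟨Conn.koszulTensorDifferential_comp_homotopy_add ω A B D₀ D₀' D₁ D₁',
    Conn.koszulTensorDifferential_comp_homotopy_add ω B A D₁ D₁' D₀ D₀'⟩

theorem phi_independent_of_connection_up_to_homotopy
    (k Q : Type*) [CommRing k] [CommRing Q] [Algebra k Q]
    (E₀ E₁ : Type*) [AddCommGroup E₀] [Module Q E₀] [AddCommGroup E₁] [Module Q E₁]
    [Module.Finite Q E₀] [Module.Projective Q E₀]
    [Module.Finite Q E₁] [Module.Projective Q E₁]
    (f : Q) (A : E₁ →ₗ[Q] E₀) (B : E₀ →ₗ[Q] E₁)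
    (hAB : ∀ y : E₀, A (B y) = f • y) (hBA : ∀ x : E₁, B (A x) = f • x)
    (na0 na0' : Conn k Q E₀) (na1 na1' : Conn k Q E₁)
    -- the differentials Ā, B̄ of E^(1)
    (Abar : E₁ × (Ω[Q⁄k] ⊗[Q] E₀) → E₀ × (Ω[Q⁄k] ⊗[Q] E₁))
    (hAbar : ∀ z, Abar z =
      (A z.1, (KaehlerDifferential.D k Q f) ⊗ₜ[Q] z.1 - (LinearMap.lTensor (Ω[Q⁄k]) B) z.2))
    (Bbar : E₀ × (Ω[Q⁄k] ⊗[Q] E₁) → E₁ × (Ω[Q⁄k] ⊗[Q] E₀))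
    (hBbar : ∀ z, Bbar z =
      (B z.1, (KaehlerDifferential.D k Q f) ⊗ₜ[Q] z.1 - (LinearMap.lTensor (Ω[Q⁄k]) A) z.2))
    -- the strict morphisms φ and φ′ given by the two choices of connections
    (φ₁ φ₁' : E₁ → E₁ × (Ω[Q⁄k] ⊗[Q] E₀)) (φ₀ φ₀' : E₀ → E₀ × (Ω[Q⁄k] ⊗[Q] E₁))
    (hφ₁ : ∀ x, φ₁ x = (x, na0.toFun (A x) - (LinearMap.lTensor (Ω[Q⁄k]) A) (na1.toFun x)))
    (hφ₁' : ∀ x, φ₁' x = (x, na0'.toFun (A x) - (LinearMap.lTensor (Ω[Q⁄k]) A) (na1'.toFun x)))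
    (hφ₀ : ∀ y, φ₀ y = (y, na1.toFun (B y) - (LinearMap.lTensor (Ω[Q⁄k]) B) (na0.toFun y)))
    (hφ₀' : ∀ y, φ₀' y = (y, na1'.toFun (B y) - (LinearMap.lTensor (Ω[Q⁄k]) B) (na0'.toFun y)))
    -- the homotopy
    (α₀ : E₀ → E₁ × (Ω[Q⁄k] ⊗[Q] E₀)) (α₁ : E₁ → E₀ × (Ω[Q⁄k] ⊗[Q] E₁))
    (hα₀ : ∀ y, α₀ y = (0, na0.toFun y - na0'.toFun y))
    (hα₁ : ∀ x, α₁ x = (0, na1.toFun x - na1'.toFun x)) :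
    -- α₀, α₁ are Q-linear
    (∀ (q : Q) (y y' : E₀), α₀ (y + y') = α₀ y + α₀ y' ∧ α₀ (q • y) = q • α₀ y) ∧
    (∀ (q : Q) (x x' : E₁), α₁ (x + x') = α₁ x + α₁ x' ∧ α₁ (q • x) = q • α₁ x) ∧
    -- the homotopy identities
    (∀ y : E₀, Abar (α₀ y) + α₁ (B y) = φ₀ y - φ₀' y) ∧
    (∀ x : E₁, Bbar (α₁ x) + α₀ (A x) = φ₁ x - φ₁' x) := by
  have h := phi_independent_of_connection_up_to_homotopy_general
    (KaehlerDifferential.D k Q f) A B na0 na0' na1 na1'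
  rw [funext hAbar, funext hBbar, funext hφ₁, funext hφ₁', funext hφ₀, funext hφ₀', funext hα₀,
    funext hα₁]
  exact ⟨fun q y y' => ⟨(na0.homotopy E₁ na0').map_add y y', (na0.homotopy E₁ na0').map_smul q y⟩,
    fun q x x' => ⟨(na1.homotopy E₀ na1').map_add x x', (na1.homotopy E₀ na1').map_smul q x⟩,
    LinearMap.congr_fun h.1, LinearMap.congr_fun h.2⟩
end

section
/- Let C denote the two-term complex Q →^{df∧} Ω¹ (Q in degree 0, Ω¹ in degree 1) and let Ω^{(n)}_{Q,df} denote the complex Q → Ω¹ → Ω² → ⋯ → Ωⁿ whose differential in degree m is multiplication by (n−m)·df. Then the wedge map ∧ : C^{⊗n} → Ω^{(n)}_{Q,df}, defined by multiplying the tensor factors together in the exterior algebra, is a map of complexes: for homogeneous elements a₁, …, aₙ of C of total degree m, ∧ applied to the tensor-product differential of a₁⊗⋯⊗aₙ equals (n−m)·df ∧ a₁ ∧ ⋯ ∧ aₙ. -/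
/-!
STATEMENT 3: The wedge map ∧ : (Q →^{df∧} Ω¹)^{⊗n} → Ω^{(n)}_{Q,df} is a map of complexes:
for homogeneous elements a₁, …, aₙ of the two-term complex C = (Q →^{df∧} Ω¹) of total
degree m, applying ∧ to the (Koszul-signed) tensor-product differential of a₁ ⊗ ⋯ ⊗ aₙ
equals (n − m)·df ∧ a₁ ∧ ⋯ ∧ aₙ.

A homogeneous elementary tensor is recorded by the set S ⊆ Fin n of positions of degree 1
(so m = #S), one-forms ω i for i ∈ S and scalars q i for i ∉ S; the corresponding factor in
the exterior algebra is ι(ω i) (degree 1) resp. algebraMap (q i) (degree 0), the wedge is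
the ordered product of the factors, the differential ∂ sends a degree-0 factor q to
df ∧ q = q • df (in degree 1) and kills degree-1 factors, and the Koszul sign of position i
is (−1)^{#(S ∩ [0,i))}.
-/

open TensorProduct

/-!
Moving `df` from the front of `df ∧ a₁ ∧ ⋯ ∧ aₙ` to just before a factor `aᵢ` of degree `0`
contributes exactly the Koszul sign of position `i`, so each of the `n - m` terms of the
differential has wedge `df ∧ a₁ ∧ ⋯ ∧ aₙ`.
-/

theorem prod_Iio_fin_succ {M : Type*} [CommMonoid M] {n : ℕ} (f : Fin (n + 1) → M) (i : Fin n) :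
    ∏ j ∈ Finset.Iio i.succ, f j = f 0 * ∏ j ∈ Finset.Iio i, f j.succ := by
  rw [← Finset.Ico_bot, bot_eq_zero, ← Finset.mul_prod_Ioo_eq_prod_Ico i.succ_pos,
    ← Fin.map_succEmb_Iio, Finset.prod_map]
  simp only [Fin.coe_succEmb]

theorem mul_prod_ofFn_eq_smul_prod_update {R A : Type*} [CommMonoid R] [Monoid A] [MulAction R A]
    [IsScalarTower R A A] [SMulCommClass R A A] {n : ℕ} (x : A) (b : Fin n → A) (ε : Fin n → R)
    (i : Fin n) (hcomm : ∀ j < i, x * b j = ε j • (b j * x)) :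
    x * (List.ofFn b).prod =
      (∏ j ∈ Finset.Iio i, ε j) • (List.ofFn (Function.update b i (x * b i))).prod := by
  induction n with
  | zero => exact i.elim0
  | succ n ih =>
    cases b using Fin.consCases with | _ a b =>
    cases i using Fin.cases with
    | zero =>
      rw [← bot_eq_zero, Finset.Iio_bot, Finset.prod_empty, one_smul, bot_eq_zero, Fin.cons_zero,
        Fin.update_cons_zero, List.ofFn_cons, List.ofFn_cons, List.prod_cons, List.prod_cons,
        mul_assoc]
    | succ i =>
      have hhead : x * a = ε 0 • (a * x) := by simpa using hcomm 0 i.succ_pos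
      have htail : x * (List.ofFn b).prod = (∏ j ∈ Finset.Iio i, ε j.succ) •
          (List.ofFn (Function.update b i (x * b i))).prod :=
        ih b (fun j ↦ ε j.succ) i fun j hj ↦ by
          simpa using hcomm j.succ (Fin.succ_lt_succ_iff.mpr hj)
      rw [Fin.cons_succ, ← Fin.cons_update, List.ofFn_cons, List.ofFn_cons, List.prod_cons,
        List.prod_cons]
      calc
        x * (a * (List.ofFn b).prod) = ε 0 • (a * (x * (List.ofFn b).prod)) := by
          rw [← mul_assoc, hhead, smul_mul_assoc, mul_assoc]
        _ = (∏ j ∈ Finset.Iio i.succ, ε j) •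
            (a * (List.ofFn (Function.update b i (x * b i))).prod) := by
          rw [htail, mul_smul_comm, smul_smul, prod_Iio_fin_succ]

section Exterior

open ExteriorAlgebra

variable {Q M : Type*} [CommRing Q] [AddCommGroup M] [Module Q M]
  {n : ℕ} {S : Finset (Fin n)} {ω : Fin n → M} {q : Fin n → Q}
  {b : Fin n → ExteriorAlgebra Q M}

theorem neg_one_pow_smul_prod_update_eq_ι_mul_prod (η : M)
    (hb : ∀ i, b i = if i ∈ S then ι Q (ω i) else algebraMap Q (ExteriorAlgebra Q M) (q i))
    {i : Fin n} (hi : i ∉ S) :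
    ((-1 : ℤ) ^ (S ∩ Finset.Iio i).card) •
        (List.ofFn (Function.update b i (ι Q (q i • η)))).prod =
      ι Q η * (List.ofFn b).prod := by
  have hsign : ∏ j ∈ Finset.Iio i, (if j ∈ S then (-1 : ℤ) else 1) =
      (-1) ^ (S ∩ Finset.Iio i).card := by
    rw [Finset.prod_ite_mem, Finset.prod_const, Finset.inter_comm]
  have hdiff : ι Q (q i • η) = ι Q η * b i := by
    rw [hb i, if_neg hi, map_smul, Algebra.smul_def, Algebra.commutes]
  have hcomm (j : Fin n) : ι Q η * b j = (if j ∈ S then (-1 : ℤ) else 1) • (b j * ι Q η) := by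
    rw [hb j]
    split_ifs
    · rw [neg_one_smul, eq_neg_iff_add_eq_zero, ι_add_mul_swap]
    · rw [one_smul, Algebra.commutes]
  rw [hdiff, ← hsign, mul_prod_ofFn_eq_smul_prod_update (ι Q η) b _ i fun j _ ↦ hcomm j]

theorem wedge_is_chain_map_general (η : M)
    (hb : ∀ i, b i = if i ∈ S then ι Q (ω i) else algebraMap Q (ExteriorAlgebra Q M) (q i)) :
    ∑ i ∈ Sᶜ, ((-1 : ℤ) ^ (S ∩ Finset.Iio i).card) •
        (List.ofFn (Function.update b i (ι Q (q i • η)))).prod =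
      (n - S.card) • (ι Q η * (List.ofFn b).prod) :=
  calc
    _ = ∑ _i ∈ Sᶜ, ι Q η * (List.ofFn b).prod :=
      Finset.sum_congr rfl fun _ hi ↦
        neg_one_pow_smul_prod_update_eq_ι_mul_prod η hb (Finset.mem_compl.mp hi)
    _ = (n - S.card) • (ι Q η * (List.ofFn b).prod) := by
      rw [Finset.sum_const, Finset.card_compl, Fintype.card_fin]

end Exterior

theorem wedge_is_chain_map
    (k Q : Type*) [CommRing k] [CommRing Q] [Algebra k Q]
    (f : Q) (n : ℕ) (S : Finset (Fin n)) (ω : Fin n → Ω[Q⁄k]) (q : Fin n → Q)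
    (b : Fin n → ExteriorAlgebra Q (Ω[Q⁄k]))
    (hb : ∀ i, b i = if i ∈ S then ExteriorAlgebra.ι Q (ω i)
      else algebraMap Q (ExteriorAlgebra Q (Ω[Q⁄k])) (q i)) :
    -- ∧ ∘ ∂ applied to the elementary tensor …
    ∑ i ∈ Sᶜ, ((-1 : ℤ) ^ (S ∩ Finset.Iio i).card) •
        (List.ofFn (Function.update b i
          (ExteriorAlgebra.ι Q (q i • KaehlerDifferential.D k Q f)))).prod
      -- … equals (n − m)·df ∧ a₁ ∧ ⋯ ∧ aₙ
      = (n - S.card) •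
        (ExteriorAlgebra.ι Q (KaehlerDifferential.D k Q f) * (List.ofFn b).prod) :=
  wedge_is_chain_map_general (KaehlerDifferential.D k Q f) hb
end

section
/- Let E = (E₁, E₀, A, B) and E′ = (E′₁, E′₀, C, D) be matrix factorizations of f ∈ Q, with connections ∇₀, ∇₁ on E₀, E₁ and ∇₀′, ∇₁′ on E′₀, E′₁, and let β = (β₀, β₁) : E′ → E be a strict morphism. Then the strict morphisms φ̃_E ∘ β and (1⊗β) ∘ φ̃_{E′} from E′ to (Q →^{df∧} Ω¹) ⊗_mf E are homotopic; explicitly, the Q-linear maps ψ₀ = (0, ∇₀∘β₀ − (1⊗β₀)∘∇₀′) and ψ₁ = (0, ∇₁∘β₁ − (1⊗β₁)∘∇₁′) form a homotopy between them. -/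
/-!
STATEMENT 11: For a strict morphism β : E′ → E of matrix factorizations of f and choices
of connections on both, the strict morphisms φ̃_E ∘ β and (1⊗β) ∘ φ̃_{E′} from E′ to
(Q →^{df∧} Ω¹) ⊗_mf E are homotopic, via ψ₀ = (0, ∇₀∘β₀ − (1⊗β₀)∘∇₀′) and
ψ₁ = (0, ∇₁∘β₁ − (1⊗β₁)∘∇₁′).
-/

open TensorProduct

/-!
For connections on `E` and `F` and a `Q`-linear map `u : E → F`, the covariant derivative
`∇u = ∇ ∘ u - (1 ⊗ u) ∘ ∇` is `Q`-linear and obeys the Leibniz rule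
`∇(v ∘ u) = ∇v ∘ u + (1 ⊗ v) ∘ ∇u`. The Atiyah class consists of `∇A` and `∇B`, and the homotopy of
`∇β₀` and `∇β₁`, so expanding both sides of `∇(A ∘ β₁) = ∇(β₀ ∘ C)` and of `∇(B ∘ β₀) = ∇(β₁ ∘ D)`
gives the homotopy identities.
-/

noncomputable section

variable {k Q : Type*} [CommRing k] [CommRing Q] [Algebra k Q]
  {E F G E' F' : Type*} [AddCommGroup E] [Module Q E] [AddCommGroup F] [Module Q F]
  [AddCommGroup G] [Module Q G] [AddCommGroup E'] [Module Q E'] [AddCommGroup F'] [Module Q F']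

namespace Conn

/-- The covariant derivative `∇u = ∇ ∘ u - (1 ⊗ u) ∘ ∇` of a `Q`-linear map `u : E → F` with respect
to connections on `E` and `F`. The components of the Atiyah class of a matrix factorization are the
covariant derivatives of its two maps. -/
def covDeriv (nablaE : Conn k Q E) (nablaF : Conn k Q F) (u : E →ₗ[Q] F) :
    E →ₗ[Q] Ω[Q⁄k] ⊗[Q] F where
  toFun x := nablaF.toFun (u x) - u.lTensor Ω[Q⁄k] (nablaE.toFun x)
  map_add' x y := by
    rw [_root_.map_add, nablaF.map_add, nablaE.map_add, _root_.map_add, add_sub_add_comm]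
  map_smul' q x := by
    rw [map_smul, nablaF.leibniz, nablaE.leibniz, _root_.map_add, LinearMap.lTensor_tmul, map_smul,
      add_sub_add_left_eq_sub, ← smul_sub, RingHom.id_apply]

theorem covDeriv_comp (nablaE : Conn k Q E) (nablaF : Conn k Q F) (nablaG : Conn k Q G)
    (v : F →ₗ[Q] G) (u : E →ₗ[Q] F) :
    covDeriv nablaE nablaG (v ∘ₗ u) =
      covDeriv nablaF nablaG v ∘ₗ u + v.lTensor Ω[Q⁄k] ∘ₗ covDeriv nablaE nablaF u := by
  ext x
  simp [covDeriv, LinearMap.lTensor_comp_apply]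

theorem covDeriv_comp_sub_of_comp_eq (nablaE : Conn k Q E) (nablaF : Conn k Q F)
    (nablaE' : Conn k Q E') (nablaF' : Conn k Q F') {u : E →ₗ[Q] F} {u' : E' →ₗ[Q] F'}
    {β : E' →ₗ[Q] E} {γ : F' →ₗ[Q] F} (h : u ∘ₗ β = γ ∘ₗ u') :
    covDeriv nablaE nablaF u ∘ₗ β - γ.lTensor Ω[Q⁄k] ∘ₗ covDeriv nablaE' nablaF' u' =
      covDeriv nablaF' nablaF γ ∘ₗ u' - u.lTensor Ω[Q⁄k] ∘ₗ covDeriv nablaE' nablaE β := by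
  rw [sub_eq_sub_iff_add_eq_add, ← covDeriv_comp, h, covDeriv_comp]

/-- One component of the morphism `φ̃ = (id, At)` from a matrix factorization to its tensor product
with `Q → Ω¹`: the one on the source `E` of the map `u : E → F` of the factorization. -/
def phiTilde (nablaE : Conn k Q E) (nablaF : Conn k Q F) (u : E →ₗ[Q] F) :
    E →ₗ[Q] E × (Ω[Q⁄k] ⊗[Q] F) :=
  LinearMap.id.prod (covDeriv nablaE nablaF u)

end Conn

/-- One component of the differential of `(Q →^{ω∧} Ω¹) ⊗_mf (E ⇄ F)`, for a one-form `ω` and maps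
`u : E → F`, `v : F → E`: the one whose source has `E` as its part of form degree zero. The other
component is obtained by exchanging `u` and `v`. -/
def formTensorDifferential (ω : Ω[Q⁄k]) (u : E →ₗ[Q] F) (v : F →ₗ[Q] E) :
    E × (Ω[Q⁄k] ⊗[Q] F) →ₗ[Q] F × (Ω[Q⁄k] ⊗[Q] E) :=
  (u ∘ₗ LinearMap.fst Q E _).prod
    (TensorProduct.mk Q Ω[Q⁄k] E ω ∘ₗ LinearMap.fst Q E _ -
      v.lTensor Ω[Q⁄k] ∘ₗ LinearMap.snd Q E _)

variable (k) in
/-- One component of the morphism that a morphism of matrix factorizations with components `β`, `γ`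
induces on the tensor products with `Q → Ω¹`. The other component is obtained by exchanging `β` and
`γ`. -/
def formTensorMap (β : E' →ₗ[Q] E) (γ : F' →ₗ[Q] F) :
    E' × (Ω[Q⁄k] ⊗[Q] F') →ₗ[Q] E × (Ω[Q⁄k] ⊗[Q] F) :=
  β.prodMap (γ.lTensor Ω[Q⁄k])

theorem formTensorDifferential_comp_inr (ω : Ω[Q⁄k]) (u : E →ₗ[Q] F) (v : F →ₗ[Q] E) :
    formTensorDifferential ω u v ∘ₗ LinearMap.inr Q E _ =
      LinearMap.inr Q F _ ∘ₗ (-v.lTensor Ω[Q⁄k]) := by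
  ext <;> simp [formTensorDifferential]

theorem Conn.phiTilde_comp_sub (nablaE : Conn k Q E) (nablaF : Conn k Q F)
    (nablaE' : Conn k Q E') (nablaF' : Conn k Q F') (u : E →ₗ[Q] F) (u' : E' →ₗ[Q] F')
    (β : E' →ₗ[Q] E) (γ : F' →ₗ[Q] F) :
    phiTilde nablaE nablaF u ∘ₗ β - formTensorMap k β γ ∘ₗ phiTilde nablaE' nablaF' u' =
      LinearMap.inr Q E _ ∘ₗ (covDeriv nablaE nablaF u ∘ₗ β -
        γ.lTensor Ω[Q⁄k] ∘ₗ covDeriv nablaE' nablaF' u') := by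
  ext x <;> simp [phiTilde, formTensorMap]

theorem Conn.homotopy_phiTilde_of_comp_eq (ω : Ω[Q⁄k]) (nablaE : Conn k Q E)
    (nablaF : Conn k Q F) (nablaE' : Conn k Q E') (nablaF' : Conn k Q F') {u : E →ₗ[Q] F}
    (v : F →ₗ[Q] E) {u' : E' →ₗ[Q] F'} {β : E' →ₗ[Q] E} {γ : F' →ₗ[Q] F} (h : u ∘ₗ β = γ ∘ₗ u') :
    formTensorDifferential ω v u ∘ₗ (LinearMap.inr Q F _ ∘ₗ covDeriv nablaE' nablaE β) +
        (LinearMap.inr Q E _ ∘ₗ covDeriv nablaF' nablaF γ) ∘ₗ u' =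
      phiTilde nablaE nablaF u ∘ₗ β - formTensorMap k β γ ∘ₗ phiTilde nablaE' nablaF' u' := by
  rw [phiTilde_comp_sub, covDeriv_comp_sub_of_comp_eq nablaE nablaF nablaE' nablaF' h,
    ← LinearMap.comp_assoc, formTensorDifferential_comp_inr, LinearMap.comp_assoc,
    LinearMap.comp_assoc, ← LinearMap.comp_add, LinearMap.neg_comp, neg_add_eq_sub]

theorem phi_tilde_commutes_with_strict_morphisms_up_to_homotopy_general
    {E₀ E₁ E₀' E₁' : Type*}
    [AddCommGroup E₀] [Module Q E₀] [AddCommGroup E₁] [Module Q E₁]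
    [AddCommGroup E₀'] [Module Q E₀'] [AddCommGroup E₁'] [Module Q E₁'] (ω : Ω[Q⁄k])
    {A : E₁ →ₗ[Q] E₀} {B : E₀ →ₗ[Q] E₁} {C : E₁' →ₗ[Q] E₀'} {D : E₀' →ₗ[Q] E₁'}
    {β₀ : E₀' →ₗ[Q] E₀} {β₁ : E₁' →ₗ[Q] E₁} (hβA : A ∘ₗ β₁ = β₀ ∘ₗ C) (hβB : B ∘ₗ β₀ = β₁ ∘ₗ D)
    (nabla₀ : Conn k Q E₀) (nabla₁ : Conn k Q E₁)
    (nabla₀' : Conn k Q E₀') (nabla₁' : Conn k Q E₁') :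
    let ψ₀ := LinearMap.inr Q E₁ _ ∘ₗ Conn.covDeriv nabla₀' nabla₀ β₀
    let ψ₁ := LinearMap.inr Q E₀ _ ∘ₗ Conn.covDeriv nabla₁' nabla₁ β₁
    formTensorDifferential ω A B ∘ₗ ψ₀ + ψ₁ ∘ₗ D =
        Conn.phiTilde nabla₀ nabla₁ B ∘ₗ β₀ -
          formTensorMap k β₀ β₁ ∘ₗ Conn.phiTilde nabla₀' nabla₁' D ∧
      formTensorDifferential ω B A ∘ₗ ψ₁ + ψ₀ ∘ₗ C =
        Conn.phiTilde nabla₁ nabla₀ A ∘ₗ β₁ -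
          formTensorMap k β₁ β₀ ∘ₗ Conn.phiTilde nabla₁' nabla₀' C :=
  ⟨Conn.homotopy_phiTilde_of_comp_eq ω nabla₀ nabla₁ nabla₀' nabla₁' A hβB,
    Conn.homotopy_phiTilde_of_comp_eq ω nabla₁ nabla₀ nabla₁' nabla₀' B hβA⟩

end

theorem phi_tilde_commutes_with_strict_morphisms_up_to_homotopy
    (k Q : Type*) [CommRing k] [CommRing Q] [Algebra k Q]
    (E₀ E₁ E₀' E₁' : Type*)
    [AddCommGroup E₀] [Module Q E₀] [AddCommGroup E₁] [Module Q E₁]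
    [AddCommGroup E₀'] [Module Q E₀'] [AddCommGroup E₁'] [Module Q E₁']
    [Module.Finite Q E₀] [Module.Projective Q E₀]
    [Module.Finite Q E₁] [Module.Projective Q E₁]
    [Module.Finite Q E₀'] [Module.Projective Q E₀']
    [Module.Finite Q E₁'] [Module.Projective Q E₁']
    (f : Q)
    -- the matrix factorization E = (E₁ -A→ E₀ -B→ E₁)
    (A : E₁ →ₗ[Q] E₀) (B : E₀ →ₗ[Q] E₁)
    (hAB : ∀ y, A (B y) = f • y) (hBA : ∀ x, B (A x) = f • x)
    -- the matrix factorization E′ = (E₁′ -C→ E₀′ -D→ E₁′)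
    (C : E₁' →ₗ[Q] E₀') (D : E₀' →ₗ[Q] E₁')
    (hCD : ∀ y, C (D y) = f • y) (hDC : ∀ x, D (C x) = f • x)
    -- a strict morphism β : E′ → E
    (β₀ : E₀' →ₗ[Q] E₀) (β₁ : E₁' →ₗ[Q] E₁)
    (hβA : ∀ x : E₁', A (β₁ x) = β₀ (C x)) (hβB : ∀ y : E₀', B (β₀ y) = β₁ (D y))
    -- connections on E and E′
    (na0 : Conn k Q E₀) (na1 : Conn k Q E₁) (na0' : Conn k Q E₀') (na1' : Conn k Q E₁')
    -- the differentials Ā, B̄ of (Q →^{df∧} Ω¹) ⊗_mf E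
    (Abar : E₁ × (Ω[Q⁄k] ⊗[Q] E₀) → E₀ × (Ω[Q⁄k] ⊗[Q] E₁))
    (hAbar : ∀ z, Abar z =
      (A z.1, (KaehlerDifferential.D k Q f) ⊗ₜ[Q] z.1 - (LinearMap.lTensor (Ω[Q⁄k]) B) z.2))
    (Bbar : E₀ × (Ω[Q⁄k] ⊗[Q] E₁) → E₁ × (Ω[Q⁄k] ⊗[Q] E₀))
    (hBbar : ∀ z, Bbar z =
      (B z.1, (KaehlerDifferential.D k Q f) ⊗ₜ[Q] z.1 - (LinearMap.lTensor (Ω[Q⁄k]) A) z.2))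
    -- φ̃_E ∘ β  (in components)
    (Φ₁ : E₁' → E₁ × (Ω[Q⁄k] ⊗[Q] E₀)) (Φ₀ : E₀' → E₀ × (Ω[Q⁄k] ⊗[Q] E₁))
    (hΦ₁ : ∀ x, Φ₁ x = (β₁ x,
      na0.toFun (A (β₁ x)) - (LinearMap.lTensor (Ω[Q⁄k]) A) (na1.toFun (β₁ x))))
    (hΦ₀ : ∀ y, Φ₀ y = (β₀ y,
      na1.toFun (B (β₀ y)) - (LinearMap.lTensor (Ω[Q⁄k]) B) (na0.toFun (β₀ y))))
    -- (1⊗β) ∘ φ̃_{E′}  (in components)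
    (Ψ₁ : E₁' → E₁ × (Ω[Q⁄k] ⊗[Q] E₀)) (Ψ₀ : E₀' → E₀ × (Ω[Q⁄k] ⊗[Q] E₁))
    (hΨ₁ : ∀ x, Ψ₁ x = (β₁ x, (LinearMap.lTensor (Ω[Q⁄k]) β₀)
      (na0'.toFun (C x) - (LinearMap.lTensor (Ω[Q⁄k]) C) (na1'.toFun x))))
    (hΨ₀ : ∀ y, Ψ₀ y = (β₀ y, (LinearMap.lTensor (Ω[Q⁄k]) β₁)
      (na1'.toFun (D y) - (LinearMap.lTensor (Ω[Q⁄k]) D) (na0'.toFun y))))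
    -- the homotopy maps
    (ψ₀ : E₀' → E₁ × (Ω[Q⁄k] ⊗[Q] E₀)) (ψ₁ : E₁' → E₀ × (Ω[Q⁄k] ⊗[Q] E₁))
    (hψ₀ : ∀ y, ψ₀ y = (0,
      na0.toFun (β₀ y) - (LinearMap.lTensor (Ω[Q⁄k]) β₀) (na0'.toFun y)))
    (hψ₁ : ∀ x, ψ₁ x = (0,
      na1.toFun (β₁ x) - (LinearMap.lTensor (Ω[Q⁄k]) β₁) (na1'.toFun x))) :
    -- ψ₀ and ψ₁ are Q-linear
    (∀ (q : Q) (y y' : E₀'), ψ₀ (y + y') = ψ₀ y + ψ₀ y' ∧ ψ₀ (q • y) = q • ψ₀ y) ∧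
    (∀ (q : Q) (x x' : E₁'), ψ₁ (x + x') = ψ₁ x + ψ₁ x' ∧ ψ₁ (q • x) = q • ψ₁ x) ∧
    -- the homotopy identities
    (∀ y : E₀', Abar (ψ₀ y) + ψ₁ (D y) = Φ₀ y - Ψ₀ y) ∧
    (∀ x : E₁', Bbar (ψ₁ x) + ψ₀ (C x) = Φ₁ x - Ψ₁ x) := by
  have ⟨h₀, h₁⟩ := phi_tilde_commutes_with_strict_morphisms_up_to_homotopy_general
    (KaehlerDifferential.D k Q f) (LinearMap.ext hβA) (LinearMap.ext hβB) na0 na1 na0' na1'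
  obtain rfl : ψ₀ = LinearMap.inr Q E₁ _ ∘ₗ Conn.covDeriv na0' na0 β₀ := funext hψ₀
  obtain rfl : ψ₁ = LinearMap.inr Q E₀ _ ∘ₗ Conn.covDeriv na1' na1 β₁ := funext hψ₁
  simp only [hAbar, hBbar, hΦ₀, hΦ₁, hΨ₀, hΨ₁]
  exact ⟨fun q y y' => ⟨map_add _ y y', map_smul _ q y⟩,
    fun q x x' => ⟨map_add _ x x', map_smul _ q x⟩, LinearMap.congr_fun h₀, LinearMap.congr_fun h₁⟩
end
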